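/- Let 0 ≤ m, h ≤ n, 0 ≤ k ≤ min{n−m, m}, 0 ≤ i ≤ h/2, 0 ≤ j ≤ (n−h)/2, with k−h ≤ j−i ≤ n−h−k and i+j ≤ k. For φ ∈ S^{h−i,i}(A), ψ ∈ S^{n−h−j,j}(B), let T_m(φ⊗ψ) = Σ_{w=max{j, i−h+m}}^{min{n−h−j, m−i}} E_{k−i−j}(n−h−2j, h−2i, m−i−j, w−j)·(R_{m−w−i}φ)⊗(R_{w−j}ψ). Then ‖T_m(φ⊗ψ)‖²_{M^{n−m,m}} = C(n−2i−2j, m−i−j)·C(n−2i−2j, k−i−j)^{−1} · ((n−i−j−k+1)/(n−2k+1)) · (n−h−j−k+i+1)_{k−i−j} · (h−i−k+j+1)_{k−i−j} · (m−k+1)_{k−i−j} · (n−m−k+1)_{k−i−j} · ‖φ‖²_{M^{h−i,i}(A)} · ‖ψ‖²_{M^{n−h−j,j}(B)}. -/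

import Mathlib

/-!
The raising operator `d*` and the lowering operator `d` form an `sl₂`-pair, adjoint to each other
for the inner product. On a lowest-weight string of weight `N`, that is, the divided powers
`v_q = U^q v_0 / q!` with `D v_0 = 0`, this gives `‖v_q‖² = C(N, q) ‖v_0‖²` (`string_norm`). The
theorem uses this fact for two kinds of strings.

* Elements `φ ∈ S^{h-i,i}(A)` and `ψ ∈ S^{n-h-j,j}(B)` generate strings `R_q φ`, `R_q ψ` of weights
  `b = h - 2i` and `a = n - h - 2j` (`strA_norm`). The summands of `T_m(φ ⊗ ψ)` for different `w`
  are orthogonal because of their supports, so with `M = k - i - j` and `c = m - i - j` its norm is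
  `‖φ‖² ‖ψ‖² ∑_x C(a, x) C(b, c - x) E_M(a, b, c, x)²` (`ip_Tmap`).

* In the tensor product of two strings of weights `a` and `b`, written in coordinates as functions
  of pairs `(p, r)`, the coefficients of `E_M(a, b, c, ·)` are the `(c - M)`-th divided power of
  the raising operator applied to `E_M(a, b, M, ·)` (`hahnE_eq`), which is a lowest-weight vector of
  weight `a + b - 2M` (`downP_strP_zero`). This reduces the sum to `c = M` (`hahn_string`), where
  `E_M(a, b, M, ·)` is a product of two Pochhammer symbols and the sum is a Vandermonde convolution
  (`lowF_norm`). The remaining identity between factorials is `closed_form`.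
-/

open Finset

noncomputable section

/-- The Radon transform `d : M^{n-m,m} → M^{n-m+1,m-1}`, `(df)(B) = ∑_{x ∉ B} f(B ∪ {x})`. -/
def dR (n : ℕ) (f : Finset (Fin n) → ℂ) : Finset (Fin n) → ℂ :=
  fun B => ∑ x ∈ Bᶜ, f (insert x B)

/-- The adjoint Radon transform `d* : M^{n-m,m} → M^{n-m-1,m+1}`. -/
def dS (n : ℕ) (f : Finset (Fin n) → ℂ) : Finset (Fin n) → ℂ :=
  fun B => ∑ x ∈ B, f (B.erase x)

/-- `R_q = (d*)^q / q!`, i.e. `(R_q f)(B) = ∑_{A ⊆ B, |A| = |B| - q} f(A)`. -/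
def RT (n q : ℕ) (f : Finset (Fin n) → ℂ) : Finset (Fin n) → ℂ :=
  fun B => if q ≤ B.card then ∑ A ∈ B.powersetCard (B.card - q), f A else 0

/-- Pochhammer symbol `(t)_p = t(t+1)⋯(t+p-1)`. -/
def poch (t : ℤ) (p : ℕ) : ℤ := ∏ i ∈ Finset.range p, (t + i)

/-- Dunkl-normalized Hahn polynomial value `E_m(a,b,c,x)`. -/
def hahnE (m : ℕ) (a b c x : ℤ) : ℤ :=
  ∑ j ∈ Finset.Icc (max 0 (x - c + m)) (min (m : ℤ) x),
    (-1) ^ j.toNat * (m.choose j.toNat : ℤ) * poch (b - m + 1) j.toNat * poch (-x) j.toNat *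
      poch (a - m + 1) (m - j.toNat) * poch (x - c) (m - j.toNat)

/-- Inner product `⟨f, g⟩ = ∑ f(s) conj (g s)`. -/
def ip (n : ℕ) (f g : Finset (Fin n) → ℂ) : ℂ :=
  ∑ s : Finset (Fin n), f s * (starRingEnd ℂ) (g s)

/-- Action of `S_n`: `(g · f)(ω) = f (g⁻¹ ω)`. -/
def permAct (n : ℕ) (g : Equiv.Perm (Fin n)) (f : Finset (Fin n) → ℂ) :
    Finset (Fin n) → ℂ :=
  fun s => f (s.image ⇑g⁻¹)

/-- The block `{o+1, …, o+a}` of the ground set `{1, …, n}` (0-indexed: positions `o ≤ x < o+a`). -/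
def block (n o a : ℕ) : Finset (Fin n) :=
  Finset.filter (fun x => o ≤ (x : ℕ) ∧ (x : ℕ) < o + a) Finset.univ

/-- Tensor product relative to the partition `A = {1,…,h}`, `B = {h+1,…,n}`:
`(φ ⊗ ψ)(Z) = φ(Z ∩ A) · ψ(Z ∩ B)`. -/
def tens (n h : ℕ) (φ ψ : Finset (Fin n) → ℂ) : Finset (Fin n) → ℂ :=
  fun Z => φ (Z ∩ block n 0 h) * ψ (Z ∩ block n h (n - h))

/-- The map `T_r(φ ⊗ ψ)` of Theorem 2.6. -/
def Tmap (n h i j k : ℕ) (φ ψ : Finset (Fin n) → ℂ) (r : ℕ) : Finset (Fin n) → ℂ :=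
  fun Z => ∑ w ∈ Finset.Icc (max j (i + r - h)) (min (n - h - j) (r - i)),
    ((hahnE (k - i - j) ((n : ℤ) - h - 2 * j) ((h : ℤ) - 2 * i) ((r : ℤ) - i - j)
      ((w : ℤ) - j) : ℤ) : ℂ) * tens n h (RT n (r - w - i) φ) (RT n (w - j) ψ) Z

/-! ### Norms along a lowest-weight string -/

/-- Lowering the `(q+1)`-st vector of a lowest-weight string of weight `N` gives back the `q`-th
vector with factor `N - q`. -/
theorem string_lower {V : Type*} [AddCommGroup V] [Module ℂ V] (U D : V →ₗ[ℂ] V) (N : ℤ)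
    (v : ℕ → V) (hD : D (v 0) = 0)
    (hU : ∀ q : ℕ, U (v q) = ((q : ℂ) + 1) • v (q + 1))
    (hcomm : ∀ q : ℕ, D (U (v q)) = U (D (v q)) + ((N : ℂ) - 2 * q) • v q) (q : ℕ) :
    D (v (q + 1)) = ((N : ℂ) - q) • v q := by
  have key : ∀ q : ℕ, ((q : ℂ) + 1) • D (v (q + 1)) = (((q : ℂ) + 1) * ((N : ℂ) - q)) • v q →
      D (v (q + 1)) = ((N : ℂ) - q) • v q := by
    intro q hq
    have h0 : ((q : ℂ) + 1) ≠ 0 := by exact_mod_cast Nat.succ_ne_zero q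
    rw [mul_smul] at hq
    exact smul_right_injective V h0 hq
  induction q with
  | zero =>
    apply key
    rw [← map_smul, ← hU, hcomm, hD, map_zero]
    simp
  | succ q ih =>
    apply key
    rw [← map_smul, ← hU, hcomm, ih, map_smul, hU, smul_smul, ← add_smul]
    congr 1
    push_cast
    ring

/-- The norm of the `q`-th divided power of the raising operator on a lowest-weight vector of
weight `N` is `C(N, q)` times the norm of that vector. -/
theorem string_norm {V : Type*} [AddCommGroup V] [Module ℂ V] (U D : V →ₗ[ℂ] V) (N : ℕ)
    (v : ℕ → V) (hD : D (v 0) = 0)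
    (hU : ∀ q : ℕ, U (v q) = ((q : ℂ) + 1) • v (q + 1))
    (hcomm : ∀ q : ℕ, D (U (v q)) = U (D (v q)) + ((N : ℂ) - 2 * q) • v q)
    (form : V → V → ℂ)
    (hl : ∀ (z : ℤ) x y, form ((z : ℂ) • x) y = z * form x y)
    (hr : ∀ (z : ℤ) x y, form x ((z : ℂ) • y) = z * form x y)
    (hadj : ∀ x y, form (U x) y = form x (D y)) (q : ℕ) :
    form (v q) (v q) = (N.choose q : ℂ) * form (v 0) (v 0) := by
  induction q with
  | zero => simp
  | succ q ih =>
    have h0 : ((q : ℂ) + 1) ≠ 0 := by exact_mod_cast Nat.succ_ne_zero q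
    apply mul_left_cancel₀ h0
    have h1 : ((q : ℂ) + 1) * form (v (q + 1)) (v (q + 1)) = form (U (v q)) (v (q + 1)) := by
      rw [hU]
      have := hl ((q : ℤ) + 1) (v (q + 1)) (v (q + 1))
      push_cast at this
      rw [this]
    have h2 := string_lower U D (N : ℤ) v hD hU (by simpa using hcomm) q
    have h3 := hr ((N : ℤ) - q) (v q) (v q)
    push_cast at h2 h3
    rw [h1, hadj, h2, h3, ih, ← mul_assoc, ← mul_assoc]
    congr 1
    rcases le_or_gt q N with h | h
    · have := Nat.choose_succ_right_eq N q
      have h' : (N.choose (q + 1) : ℂ) * (q + 1) = N.choose q * (N - q) := by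
        rw [← Nat.cast_sub h]; exact_mod_cast this
      rw [mul_comm, ← h', mul_comm]
    · rw [Nat.choose_eq_zero_of_lt h, Nat.choose_eq_zero_of_lt (by omega)]; simp

/-! ### Radon transforms relative to a subset of the ground set -/

/-- The raising operator `d*` relative to a subset `A` of the ground set: only elements of `A`
are removed. -/
def upA {n : ℕ} (A : Finset (Fin n)) :
    (Finset (Fin n) → ℂ) →ₗ[ℂ] (Finset (Fin n) → ℂ) where
  toFun f := fun B => ∑ x ∈ A, if x ∈ B then f (B.erase x) else 0
  map_add' f g := by
    ext B; simp only [Pi.add_apply, ← Finset.sum_add_distrib]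
    refine Finset.sum_congr rfl fun x _ => ?_
    split_ifs <;> simp
  map_smul' c f := by
    ext B; simp only [Pi.smul_apply, smul_eq_mul, RingHom.id_apply, Finset.mul_sum]
    refine Finset.sum_congr rfl fun x _ => ?_
    split_ifs <;> simp

/-- The lowering operator `d` relative to a subset `A` of the ground set: only elements of `A`
are inserted. -/
def downA {n : ℕ} (A : Finset (Fin n)) :
    (Finset (Fin n) → ℂ) →ₗ[ℂ] (Finset (Fin n) → ℂ) where
  toFun f := fun B => ∑ x ∈ A, if x ∈ B then 0 else f (insert x B)
  map_add' f g := by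
    ext B; simp only [Pi.add_apply, ← Finset.sum_add_distrib]
    refine Finset.sum_congr rfl fun x _ => ?_
    split_ifs <;> simp
  map_smul' c f := by
    ext B; simp only [Pi.smul_apply, smul_eq_mul, RingHom.id_apply, Finset.mul_sum]
    refine Finset.sum_congr rfl fun x _ => ?_
    split_ifs <;> simp

theorem upA_apply {n : ℕ} (A : Finset (Fin n)) (f : Finset (Fin n) → ℂ) (B : Finset (Fin n)) :
    upA A f B = ∑ x ∈ A, if x ∈ B then f (B.erase x) else 0 := rfl

theorem downA_apply {n : ℕ} (A : Finset (Fin n)) (f : Finset (Fin n) → ℂ) (B : Finset (Fin n)) :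
    downA A f B = ∑ x ∈ A, if x ∈ B then 0 else f (insert x B) := rfl

theorem upA_adjoint {n : ℕ} (A : Finset (Fin n)) (f g : Finset (Fin n) → ℂ) :
    ip n (upA A f) g = ip n f (downA A g) := by
  simp only [ip, upA_apply, downA_apply, map_sum, Finset.sum_mul, Finset.mul_sum]
  rw [Finset.sum_comm]
  conv_rhs => rw [Finset.sum_comm]
  refine Finset.sum_congr rfl fun x _ => ?_
  have e1 : ∀ B : Finset (Fin n), (if x ∈ B then f (B.erase x) else 0) * (starRingEnd ℂ) (g B) =
      if x ∈ B then f (B.erase x) * (starRingEnd ℂ) (g B) else 0 := by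
    intro B; split_ifs <;> simp
  have e2 : ∀ B : Finset (Fin n), f B * (starRingEnd ℂ) (if x ∈ B then 0 else g (insert x B)) =
      if ¬ x ∈ B then f B * (starRingEnd ℂ) (g (insert x B)) else 0 := by
    intro B; split_ifs <;> simp
  simp only [e1, e2]
  rw [← Finset.sum_filter, ← Finset.sum_filter]
  refine Finset.sum_nbij' (fun B => B.erase x) (fun B => insert x B) ?_ ?_ ?_ ?_ ?_
  · intro B _; simp
  · intro B _; simp
  · intro B hB; simp only [Finset.mem_filter] at hB; exact Finset.insert_erase hB.2
  · intro B hB; simp only [Finset.mem_filter] at hB; exact Finset.erase_insert hB.2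
  · intro B hB; simp only [Finset.mem_filter] at hB
    simp only [Finset.insert_erase hB.2]

/-- The `sl₂` commutation relation: the terms of `DU` and `UD` in which two different elements are
moved cancel, and the diagonal terms count `A ∖ B` and `A ∩ B`. -/
theorem downA_upA {n : ℕ} (A : Finset (Fin n)) (f : Finset (Fin n) → ℂ) (B : Finset (Fin n)) :
    downA A (upA A f) B = upA A (downA A f) B + ((A.card : ℂ) - 2 * ((A ∩ B).card : ℂ)) * f B := by
  simp only [upA_apply, downA_apply]
  have hR : ∀ x ∈ A, (if x ∈ B then ∑ y ∈ A, (if y ∈ B.erase x then 0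
        else f (insert y (B.erase x))) else 0) =
      ∑ y ∈ A, if x ∈ B then (if y ∈ B.erase x then 0 else f (insert y (B.erase x))) else 0 := by
    intro x _; split_ifs <;> simp
  have hL : ∀ x ∈ A, (if x ∈ B then 0 else ∑ y ∈ A, (if y ∈ insert x B
        then f ((insert x B).erase y) else 0)) =
      ∑ y ∈ A, if x ∈ B then 0 else (if y ∈ insert x B then f ((insert x B).erase y) else 0) := by
    intro x _; split_ifs <;> simp
  rw [Finset.sum_congr rfl hR, Finset.sum_congr rfl hL, Finset.sum_comm (s := A) (t := A)]
  have hdiag : ((A.card : ℂ) - 2 * ((A ∩ B).card : ℂ)) * f B =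
      ∑ x ∈ A, ∑ y ∈ A, if x = y then (if x ∈ B then - f B else f B) else 0 := by
    have : ∀ x ∈ A, (∑ y ∈ A, if x = y then (if x ∈ B then - f B else f B) else 0) =
        f B - 2 * (if x ∈ B then f B else 0) := by
      intro x hx
      rw [Finset.sum_ite_eq, if_pos hx]
      split_ifs <;> ring
    rw [Finset.sum_congr rfl this, Finset.sum_sub_distrib, ← Finset.mul_sum, ← Finset.sum_filter,
      Finset.filter_mem_eq_inter]
    simp
    ring
  rw [hdiag, ← Finset.sum_add_distrib]
  refine Finset.sum_congr rfl fun x _ => ?_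
  rw [← Finset.sum_add_distrib]
  refine Finset.sum_congr rfl fun y _ => ?_
  by_cases hxy : x = y
  · subst hxy
    by_cases hx : x ∈ B
    · simp [hx]
    · simp [hx]
  · by_cases hx : x ∈ B <;> by_cases hy : y ∈ B <;> simp [hx, hy, hxy, Ne.symm hxy]
    · rw [Finset.erase_insert_of_ne (Ne.symm hxy)]

/-- The function on the `(i + q)`-subsets of `A` summing `φ` over all subsets. For `φ` supported on
`i`-subsets of `A` this is `R_q φ`, the `q`-th vector of the string generated by `φ`. -/
def strA {n : ℕ} (A : Finset (Fin n)) (i : ℕ) (φ : Finset (Fin n) → ℂ) (q : ℕ) :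
    Finset (Fin n) → ℂ :=
  fun B => if B ⊆ A ∧ B.card = i + q then ∑ S ∈ B.powerset, φ S else 0

theorem upA_strA {n : ℕ} (A : Finset (Fin n)) (i : ℕ) (φ : Finset (Fin n) → ℂ)
    (hφ : ∀ s : Finset (Fin n), ¬(s ⊆ A ∧ s.card = i) → φ s = 0) (q : ℕ) :
    upA A (strA A i φ q) = ((q : ℂ) + 1) • strA A i φ (q + 1) := by
  ext B
  rw [upA_apply, Pi.smul_apply, smul_eq_mul]
  by_cases hB : B ⊆ A ∧ B.card = i + (q + 1)
  · have h1 : ∀ x ∈ A, (if x ∈ B then strA A i φ q (B.erase x) else 0) =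
        ∑ S ∈ B.powerset, if x ∈ B \ S then φ S else 0 := by
      intro x _
      by_cases hx : x ∈ B
      · have hc : B.erase x ⊆ A ∧ (B.erase x).card = i + q := by
          refine ⟨(Finset.erase_subset _ _).trans hB.1, ?_⟩
          rw [Finset.card_erase_of_mem hx]; omega
        rw [if_pos hx, strA, if_pos hc, ← Finset.sum_filter]
        refine Finset.sum_congr ?_ fun _ _ => rfl
        ext S
        simp only [Finset.mem_powerset, Finset.mem_filter, Finset.mem_sdiff, Finset.subset_erase]
        tauto
      · simp [hx]
    rw [Finset.sum_congr rfl h1, Finset.sum_comm, strA, if_pos hB, Finset.mul_sum]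
    refine Finset.sum_congr rfl fun S hS => ?_
    rw [Finset.mem_powerset] at hS
    by_cases hSc : S ⊆ A ∧ S.card = i
    · rw [← Finset.sum_filter, Finset.sum_const, Finset.filter_mem_eq_inter,
        Finset.inter_eq_right.mpr (Finset.sdiff_subset.trans hB.1),
        Finset.card_sdiff_of_subset hS, hSc.2, hB.2, nsmul_eq_mul]
      congr 1
      rw [Nat.add_sub_cancel_left]; push_cast; rfl
    · simp [hφ S hSc]
  · rw [strA, if_neg hB, mul_zero]
    refine Finset.sum_eq_zero fun x hxA => ?_
    by_cases hx : x ∈ B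
    · rw [if_pos hx, strA, if_neg]
      rintro ⟨h1, h2⟩
      apply hB
      constructor
      · intro y hy
        by_cases hyx : y = x
        · rwa [hyx]
        · exact h1 (Finset.mem_erase.mpr ⟨hyx, hy⟩)
      · rw [Finset.card_erase_of_mem hx] at h2
        have := Finset.card_pos.mpr ⟨x, hx⟩
        omega
    · simp [hx]

theorem strA_zero {n : ℕ} (A : Finset (Fin n)) (i : ℕ) (φ : Finset (Fin n) → ℂ)
    (hφ : ∀ s : Finset (Fin n), ¬(s ⊆ A ∧ s.card = i) → φ s = 0) : strA A i φ 0 = φ := by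
  ext B
  rw [strA]
  split_ifs with h
  · refine Finset.sum_eq_single B ?_ (by simp)
    intro S hS hne
    rw [Finset.mem_powerset] at hS
    apply hφ
    rintro ⟨_, h2⟩
    exact hne (Finset.eq_of_subset_of_card_le hS (by omega))
  · exact (hφ B (by simpa using h)).symm

theorem downA_eq_dR {n : ℕ} (A : Finset (Fin n)) (i : ℕ) (φ : Finset (Fin n) → ℂ)
    (hφ : ∀ s : Finset (Fin n), ¬(s ⊆ A ∧ s.card = i) → φ s = 0) : downA A φ = dR n φ := by
  ext B
  rw [downA_apply, dR, Finset.sum_ite, Finset.sum_const_zero, zero_add]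
  refine Finset.sum_subset (fun x => by simp) ?_
  intro x hx hx'
  apply hφ
  rintro ⟨h1, _⟩
  apply hx'
  simp only [Finset.mem_filter]
  exact ⟨h1 (Finset.mem_insert_self _ _), by simpa using hx⟩

/-- `‖R_q φ‖² = C(|A| - 2i, q) ‖φ‖²` for `φ ∈ S^{|A|-i,i}(A)`. -/
theorem strA_norm {n : ℕ} (A : Finset (Fin n)) (i : ℕ) (hi : 2 * i ≤ A.card)
    (φ : Finset (Fin n) → ℂ)
    (hφ : ∀ s : Finset (Fin n), ¬(s ⊆ A ∧ s.card = i) → φ s = 0) (hd : dR n φ = 0) (q : ℕ) :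
    ip n (strA A i φ q) (strA A i φ q) = ((A.card - 2 * i).choose q : ℂ) * ip n φ φ := by
  have h := string_norm (upA A) (downA A) (A.card - 2 * i) (strA A i φ)
    (by rw [strA_zero A i φ hφ, downA_eq_dR A i φ hφ, hd]) (upA_strA A i φ hφ) ?_ (ip n)
    ?_ ?_ (upA_adjoint A) q
  · rwa [strA_zero A i φ hφ] at h
  · intro q
    ext B
    rw [downA_upA, Pi.add_apply, Pi.smul_apply, smul_eq_mul]
    congr 1
    by_cases hB : B ⊆ A ∧ B.card = i + q
    · congr 1
      rw [Finset.inter_eq_right.mpr hB.1, hB.2]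
      push_cast [hi]
      ring
    · rw [strA, if_neg hB, mul_zero, mul_zero]
  · intro z x y
    simp only [ip, Finset.mul_sum, Pi.smul_apply, smul_eq_mul, mul_assoc]
  · intro z x y
    simp only [ip, Finset.mul_sum, Pi.smul_apply, smul_eq_mul, map_mul, map_intCast]
    exact Finset.sum_congr rfl fun _ _ => by ring

theorem strA_orth {n : ℕ} (A : Finset (Fin n)) (i : ℕ) (φ : Finset (Fin n) → ℂ) {q q' : ℕ}
    (h : q ≠ q') : ip n (strA A i φ q) (strA A i φ q') = 0 := by
  refine Finset.sum_eq_zero fun B _ => ?_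
  simp only [strA]
  by_cases h1 : B.card = i + q
  · have h2 : ¬ (B.card = i + q') := by omega
    simp [h2]
  · simp [h1]

theorem RT_eq_strA {n : ℕ} (A : Finset (Fin n)) (i : ℕ) (φ : Finset (Fin n) → ℂ)
    (hφ : ∀ s : Finset (Fin n), ¬(s ⊆ A ∧ s.card = i) → φ s = 0) (q : ℕ) (B : Finset (Fin n))
    (hB : B ⊆ A) : RT n q φ B = strA A i φ q B := by
  rw [RT, strA]
  by_cases h : B.card = i + q
  · rw [if_pos (by omega), if_pos ⟨hB, h⟩, h, Nat.add_sub_cancel]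
    refine Finset.sum_subset (fun S => ?_) ?_
    · simp only [Finset.mem_powersetCard, Finset.mem_powerset]; tauto
    · intro S hS hS'
      apply hφ
      rintro ⟨_, h2⟩
      exact hS' (Finset.mem_powersetCard.mpr ⟨Finset.mem_powerset.mp hS, h2⟩)
  · have h' : ¬ (B ⊆ A ∧ B.card = i + q) := fun h' => h h'.2
    rw [if_neg h']
    split_ifs with hq
    · refine Finset.sum_eq_zero fun S hS => hφ S ?_
      rw [Finset.mem_powersetCard] at hS
      rintro ⟨_, h2⟩
      omega
    · rfl

/-! ### The tensor product -/

theorem block_card (n o a : ℕ) (h : o + a ≤ n) : (block n o a).card = a := by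
  have : (block n o a).map Fin.valEmbedding = Finset.Ico o (o + a) := by
    ext x
    simp only [block, Finset.mem_map, Finset.mem_filter, Finset.mem_univ, true_and,
      Fin.valEmbedding_apply, Finset.mem_Ico]
    constructor
    · rintro ⟨y, hy, rfl⟩; exact hy
    · intro hx; exact ⟨⟨x, by omega⟩, hx, rfl⟩
  rw [← Finset.card_map Fin.valEmbedding, this]
  simp

/-- The inner product is multiplicative on tensor products. -/
theorem ip_tens (n h : ℕ) (hh : h ≤ n) (f f' g g' : Finset (Fin n) → ℂ)
    (hf : ∀ s, ¬ s ⊆ block n 0 h → f s = 0) (hg : ∀ s, ¬ s ⊆ block n h (n - h) → g s = 0) :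
    ip n (tens n h f g) (tens n h f' g') = ip n f f' * ip n g g' := by
  have hcov : ∀ x : Fin n, x ∈ block n 0 h ↔ x ∉ block n h (n - h) := by
    intro x
    have := x.2
    simp only [block, Finset.mem_filter, Finset.mem_univ, true_and]
    omega
  have r1 : ip n f f' = ∑ s ∈ (block n 0 h).powerset, f s * (starRingEnd ℂ) (f' s) := by
    refine (Finset.sum_subset (Finset.subset_univ _) ?_).symm
    intro s _ hs
    rw [hf s (by simpa using hs), zero_mul]
  have r2 : ip n g g' = ∑ s ∈ (block n h (n - h)).powerset, g s * (starRingEnd ℂ) (g' s) := by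
    refine (Finset.sum_subset (Finset.subset_univ _) ?_).symm
    intro s _ hs
    rw [hg s (by simpa using hs), zero_mul]
  rw [r1, r2, Finset.sum_mul_sum, ← Finset.sum_product', ip]
  refine Finset.sum_nbij' (fun Z => (Z ∩ block n 0 h, Z ∩ block n h (n - h)))
    (fun p => p.1 ∪ p.2) ?_ ?_ ?_ ?_ ?_
  · intro Z _
    simp [Finset.inter_subset_right]
  · intro p _; simp
  · intro Z _
    ext x
    have := hcov x
    simp only [Finset.mem_union, Finset.mem_inter]
    tauto
  · rintro ⟨p, q⟩ hp
    simp only [Finset.mem_product, Finset.mem_powerset] at hp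
    ext x
    · have := hcov x
      have := @hp.1 x
      have := @hp.2 x
      simp only [Finset.mem_union, Finset.mem_inter]
      tauto
    · have := hcov x
      have := @hp.1 x
      have := @hp.2 x
      simp only [Finset.mem_union, Finset.mem_inter]
      tauto
  · intro Z _
    simp only [tens, map_mul]
    ring

/-- Orthogonality of the summands reduces the norm of `T_m(φ ⊗ ψ)` to a weighted sum of squares of
Hahn polynomial values. -/
theorem ip_Tmap (n h i j k m : ℕ) (hh : h ≤ n) (hi : 2 * i ≤ h) (hj : 2 * j ≤ n - h)
    (φ ψ : Finset (Fin n) → ℂ)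
    (hφsupp : ∀ s : Finset (Fin n), ¬(s ⊆ block n 0 h ∧ s.card = i) → φ s = 0)
    (hφd : dR n φ = 0)
    (hψsupp : ∀ s : Finset (Fin n), ¬(s ⊆ block n h (n - h) ∧ s.card = j) → ψ s = 0)
    (hψd : dR n ψ = 0) :
    ip n (Tmap n h i j k φ ψ m) (Tmap n h i j k φ ψ m) =
      (∑ w ∈ Finset.Icc (max j (i + m - h)) (min (n - h - j) (m - i)),
        (((hahnE (k - i - j) ((n : ℤ) - h - 2 * j) ((h : ℤ) - 2 * i) ((m : ℤ) - i - j)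
          ((w : ℤ) - j) : ℤ) : ℂ)) ^ 2 * (((h - 2 * i).choose (m - w - i) : ℂ) *
            ((n - h - 2 * j).choose (w - j) : ℂ))) * (ip n φ φ * ip n ψ ψ) := by
  set A := block n 0 h with hA
  set B := block n h (n - h) with hB
  set I := Finset.Icc (max j (i + m - h)) (min (n - h - j) (m - i)) with hI
  set c : ℕ → ℤ := fun w => hahnE (k - i - j) ((n : ℤ) - h - 2 * j) ((h : ℤ) - 2 * i)
    ((m : ℤ) - i - j) ((w : ℤ) - j) with hc
  have hT : ∀ Z, Tmap n h i j k φ ψ m Z = ∑ w ∈ I, (c w : ℂ) *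
      tens n h (strA A i φ (m - w - i)) (strA B j ψ (w - j)) Z := by
    intro Z
    refine Finset.sum_congr rfl fun w _ => ?_
    simp only [tens]
    rw [RT_eq_strA A i φ hφsupp _ _ Finset.inter_subset_right,
      RT_eq_strA B j ψ hψsupp _ _ Finset.inter_subset_right]
  have hexp : ip n (Tmap n h i j k φ ψ m) (Tmap n h i j k φ ψ m) =
      ∑ w ∈ I, ∑ w' ∈ I, ((c w : ℂ) * (c w' : ℂ)) *
        ip n (tens n h (strA A i φ (m - w - i)) (strA B j ψ (w - j)))
          (tens n h (strA A i φ (m - w' - i)) (strA B j ψ (w' - j))) := by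
    simp only [ip, hT, map_sum, Finset.sum_mul_sum, map_mul, map_intCast]
    simp only [Finset.mul_sum]
    rw [Finset.sum_comm]
    refine Finset.sum_congr rfl fun w _ => ?_
    rw [Finset.sum_comm]
    refine Finset.sum_congr rfl fun w' _ => Finset.sum_congr rfl fun Z _ => ?_
    ring
  rw [hexp, Finset.sum_mul]
  have hcardA : A.card = h := block_card n 0 h (by omega)
  have hcardB : B.card = n - h := block_card n h (n - h) (by omega)
  have hsupp : ∀ (C : Finset (Fin n)) (l : ℕ) (χ : Finset (Fin n) → ℂ) (q : ℕ) (s),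
      ¬ s ⊆ C → strA C l χ q s = 0 := by
    intro C l χ q s hs
    rw [strA, if_neg (fun h => hs h.1)]
  refine Finset.sum_congr rfl fun w hw => ?_
  rw [Finset.sum_eq_single w]
  · rw [ip_tens n h hh _ _ _ _ (hsupp A i φ _) (hsupp B j ψ _),
      strA_norm A i (by omega) φ hφsupp hφd, strA_norm B j (by omega) ψ hψsupp hψd,
      hcardA, hcardB]
    ring
  · intro w' hw' hne
    rw [ip_tens n h hh _ _ _ _ (hsupp A i φ _) (hsupp B j ψ _),
      strA_orth B j ψ (q := w - j) (q' := w' - j), mul_zero, mul_zero]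
    rw [hI, Finset.mem_Icc] at hw hw'
    omega
  · intro h; exact absurd hw h

/-! ### Pochhammer symbols and Hahn polynomials -/

theorem poch_succ (t : ℤ) (p : ℕ) : poch t (p + 1) = poch t p * (t + p) := by
  rw [poch, Finset.prod_range_succ, ← poch]

theorem factorial_mul_poch (s p : ℕ) :
    (s.factorial : ℤ) * poch ((s : ℤ) + 1) p = ((s + p).factorial : ℤ) := by
  induction p with
  | zero => simp [poch]
  | succ p ih =>
    rw [poch_succ, ← mul_assoc, ih, ← add_assoc, Nat.factorial_succ]
    push_cast; ring

theorem poch_eq_choose (s p : ℕ) :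
    poch ((s : ℤ) + 1) p = (p.factorial : ℤ) * ((s + p).choose s : ℤ) := by
  have h1 := factorial_mul_poch s p
  have h2 : ((s + p).choose s * s.factorial * p.factorial : ℤ) = ((s + p).factorial : ℤ) := by
    rw [Nat.choose_symm_add]
    exact_mod_cast Nat.add_choose_mul_factorial_mul_factorial s p
  have h0 : (s.factorial : ℤ) ≠ 0 := by exact_mod_cast Nat.factorial_ne_zero s
  apply mul_left_cancel₀ h0
  rw [h1, ← h2]; ring

theorem poch_neg (x p : ℕ) :
    poch (-(x : ℤ)) p = (-1) ^ p * (p.factorial : ℤ) * (x.choose p : ℤ) := by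
  induction p with
  | zero => simp [poch]
  | succ p ih =>
    have h : (x.choose (p + 1) : ℤ) * (p + 1) = x.choose p * (x - p) := by
      rcases le_or_gt p x with h | h
      · rw [← Nat.cast_sub h]; exact_mod_cast Nat.choose_succ_right_eq x p
      · rw [Nat.choose_eq_zero_of_lt h, Nat.choose_eq_zero_of_lt (by omega)]; simp
    rw [poch_succ, ih, Nat.factorial_succ, pow_succ]
    push_cast
    linear_combination (-1) ^ p * (p.factorial : ℤ) * h

/-- The values of `E_M(s + M, t + M, M, ·)`, the coefficients of the lowest-weight vector. -/
def lowF (s t M y : ℕ) : ℤ :=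
  (-1) ^ (M + y) * (M.factorial : ℤ) * poch ((t : ℤ) + 1) y * poch ((s : ℤ) + 1) (M - y)

/-- The value `E_M(s + M, t + M, p + r, p)` is the coefficient at `(p, r)` of a divided power of
the raising operator applied to the lowest-weight vector. -/
theorem hahnE_eq (s t M p r : ℕ) :
    hahnE M ((s : ℤ) + M) ((t : ℤ) + M) ((p : ℤ) + r) p =
      ∑ y ∈ Finset.range (M + 1), lowF s t M y * ((p.choose y : ℤ) * (r.choose (M - y) : ℤ)) := by
  set g : ℕ → ℤ := fun y => lowF s t M y * ((p.choose y : ℤ) * (r.choose (M - y) : ℤ)) with hg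
  have hterm : ∀ y : ℕ, y ≤ M → (-1) ^ y * (M.choose y : ℤ) * poch ((t : ℤ) + M - M + 1) y *
      poch (-(p : ℤ)) y * poch ((s : ℤ) + M - M + 1) (M - y) *
      poch ((p : ℤ) - ((p : ℤ) + r)) (M - y) = g y := by
    intro y hy
    have e1 : (p : ℤ) - ((p : ℤ) + r) = -(r : ℤ) := by ring
    have h2 : (M.choose y * y.factorial * (M - y).factorial : ℤ) = (M.factorial : ℤ) := by
      exact_mod_cast Nat.choose_mul_factorial_mul_factorial hy
    have h3 : ((-1) ^ y * (-1) ^ y : ℤ) = 1 := by rw [← mul_pow]; simp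
    have h4 : ((-1) ^ (M + y) : ℤ) = (-1) ^ (M - y) := by
      have : M + y = (M - y) + y + y := by omega
      rw [this, pow_add, pow_add, mul_assoc, h3, mul_one]
    rw [e1, poch_neg, poch_neg, hg]
    simp only [lowF, add_sub_cancel_right, h4, ← h2]
    linear_combination (M.choose y * y.factorial * (M - y).factorial * (-1) ^ (M - y) *
      poch ((t : ℤ) + 1) y * poch ((s : ℤ) + 1) (M - y) * p.choose y * r.choose (M - y) : ℤ) * h3
  have h1 : hahnE M ((s : ℤ) + M) ((t : ℤ) + M) ((p : ℤ) + r) p =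
      ∑ y ∈ Finset.Icc (max 0 ((p : ℤ) - ((p : ℤ) + r) + M)) (min (M : ℤ) p), g y.toNat := by
    refine Finset.sum_congr rfl fun y hy => hterm _ ?_
    rw [Finset.mem_Icc] at hy
    omega
  have h2 : ∑ y ∈ Finset.Icc (max 0 ((p : ℤ) - ((p : ℤ) + r) + M)) (min (M : ℤ) p), g y.toNat =
      ∑ y ∈ Finset.Icc (0 : ℤ) M, g y.toNat := by
    refine Finset.sum_subset (fun y => by simp only [Finset.mem_Icc]; omega) ?_
    intro y hy hy'
    rw [Finset.mem_Icc] at hy hy'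
    simp only [hg]
    rcases lt_or_ge p y.toNat with h | h
    · rw [Nat.choose_eq_zero_of_lt h]; simp
    · rw [Nat.choose_eq_zero_of_lt (show r < M - y.toNat by omega)]; simp
  rw [h1, h2]
  refine Finset.sum_nbij' Int.toNat (fun y => (y : ℤ)) ?_ ?_ ?_ ?_ ?_
  · intro y; simp only [Finset.mem_Icc, Finset.mem_range]; omega
  · intro y; simp only [Finset.mem_Icc, Finset.mem_range]; omega
  · intro y; simp only [Finset.mem_Icc]; omega
  · intro y _; simp
  · intro y _; rfl

/-! ### The tensor product of two `sl₂`-strings in coordinates -/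

/-- Raising operator on functions of a pair `(p, r)`, where `(p, r)` stands for the tensor product
of the `p`-th and the `r`-th divided power of two strings. -/
def upP : (ℕ × ℕ → ℂ) →ₗ[ℂ] (ℕ × ℕ → ℂ) where
  toFun f := fun z => (z.1 : ℂ) * f (z.1 - 1, z.2) + (z.2 : ℂ) * f (z.1, z.2 - 1)
  map_add' f g := by ext z; simp only [Pi.add_apply]; ring
  map_smul' c f := by ext z; simp only [Pi.smul_apply, smul_eq_mul, RingHom.id_apply]; ring

/-- Lowering operator for two strings of weights `a` and `b`. -/
def downP (a b : ℕ) : (ℕ × ℕ → ℂ) →ₗ[ℂ] (ℕ × ℕ → ℂ) where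
  toFun f := fun z => ((a : ℂ) - z.1) * f (z.1 + 1, z.2) + ((b : ℂ) - z.2) * f (z.1, z.2 + 1)
  map_add' f g := by ext z; simp only [Pi.add_apply]; ring
  map_smul' c f := by ext z; simp only [Pi.smul_apply, smul_eq_mul, RingHom.id_apply]; ring

/-- The bilinear form with weights `C(a, p) C(b, r)`. -/
def formP (a b : ℕ) (f g : ℕ × ℕ → ℂ) : ℂ :=
  ∑ p ∈ Finset.range (a + b + 1), ∑ r ∈ Finset.range (a + b + 1),
    (a.choose p : ℂ) * (b.choose r : ℂ) * (f (p, r) * g (p, r))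

theorem downP_upP (a b : ℕ) (f : ℕ × ℕ → ℂ) (z : ℕ × ℕ) :
    downP a b (upP f) z = upP (downP a b f) z +
      ((a : ℂ) + b - 2 * ((z.1 + z.2 : ℕ) : ℂ)) * f z := by
  obtain ⟨p, r⟩ := z
  simp only [downP, upP, LinearMap.coe_mk, AddHom.coe_mk, Nat.add_sub_cancel]
  rcases p with _ | p <;> rcases r with _ | r <;>
    (try simp only [Nat.add_sub_cancel]) <;> push_cast <;> ring

theorem choose_succ_cast (a p : ℕ) :
    (a.choose (p + 1) : ℂ) * ((p : ℂ) + 1) = a.choose p * ((a : ℂ) - p) := by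
  rcases le_or_gt p a with h | h
  · rw [← Nat.cast_sub h]; exact_mod_cast Nat.choose_succ_right_eq a p
  · rw [Nat.choose_eq_zero_of_lt h, Nat.choose_eq_zero_of_lt (by omega)]; simp

/-- One-variable summation by parts behind the adjointness of `upP` and `downP`. -/
theorem sum_choose_shift (a L : ℕ) (hL : a ≤ L) (u v : ℕ → ℂ) :
    ∑ p ∈ Finset.range (L + 1), (a.choose p : ℂ) * ((p : ℂ) * u (p - 1)) * v p =
      ∑ p ∈ Finset.range (L + 1), (a.choose p : ℂ) * u p * (((a : ℂ) - p) * v (p + 1)) := by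
  rw [Finset.sum_range_succ', Finset.sum_range_succ]
  have h0 : (a.choose L : ℂ) * ((a : ℂ) - L) = 0 := by
    rw [← choose_succ_cast, Nat.choose_eq_zero_of_lt (by omega)]; simp
  have h1 : (a.choose L : ℂ) * u L * (((a : ℂ) - L) * v (L + 1)) = 0 := by
    linear_combination u L * v (L + 1) * h0
  rw [h1]
  simp only [Nat.cast_zero, zero_mul, mul_zero, add_zero]
  refine Finset.sum_congr rfl fun p _ => ?_
  have := choose_succ_cast a p
  rw [Nat.add_sub_cancel]
  push_cast
  linear_combination u p * v (p + 1) * this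

theorem upP_adjoint (a b : ℕ) (f g : ℕ × ℕ → ℂ) :
    formP a b (upP f) g = formP a b f (downP a b g) := by
  have e1 : formP a b (upP f) g =
      (∑ r ∈ Finset.range (a + b + 1), (b.choose r : ℂ) * ∑ p ∈ Finset.range (a + b + 1),
        (a.choose p : ℂ) * ((p : ℂ) * f (p - 1, r)) * g (p, r)) +
      ∑ p ∈ Finset.range (a + b + 1), (a.choose p : ℂ) * ∑ r ∈ Finset.range (a + b + 1),
        (b.choose r : ℂ) * ((r : ℂ) * f (p, r - 1)) * g (p, r) := by
    simp only [Finset.mul_sum]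
    rw [Finset.sum_comm, ← Finset.sum_add_distrib]
    refine Finset.sum_congr rfl fun p _ => ?_
    rw [← Finset.sum_add_distrib]
    refine Finset.sum_congr rfl fun r _ => ?_
    simp only [upP, LinearMap.coe_mk, AddHom.coe_mk]
    ring
  have e2 : formP a b f (downP a b g) =
      (∑ r ∈ Finset.range (a + b + 1), (b.choose r : ℂ) * ∑ p ∈ Finset.range (a + b + 1),
        (a.choose p : ℂ) * f (p, r) * (((a : ℂ) - p) * g (p + 1, r))) +
      ∑ p ∈ Finset.range (a + b + 1), (a.choose p : ℂ) * ∑ r ∈ Finset.range (a + b + 1),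
        (b.choose r : ℂ) * f (p, r) * (((b : ℂ) - r) * g (p, r + 1)) := by
    simp only [Finset.mul_sum]
    rw [Finset.sum_comm, ← Finset.sum_add_distrib]
    refine Finset.sum_congr rfl fun p _ => ?_
    rw [← Finset.sum_add_distrib]
    refine Finset.sum_congr rfl fun r _ => ?_
    simp only [downP, LinearMap.coe_mk, AddHom.coe_mk]
    ring
  rw [e1, e2]
  congr 1
  · refine Finset.sum_congr rfl fun r _ => ?_
    rw [sum_choose_shift a (a + b) (by omega) (fun p => f (p, r)) (fun p => g (p, r))]
  · refine Finset.sum_congr rfl fun p _ => ?_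
    rw [sum_choose_shift b (a + b) (by omega) (fun r => f (p, r)) (fun r => g (p, r))]

/-- The `q`-th vector of the string generated by `lowF`, in degree `M + q`. -/
def strP (s t M q : ℕ) : ℕ × ℕ → ℂ := fun z =>
  if z.1 + z.2 = M + q then
    ∑ y ∈ Finset.range (M + 1), (lowF s t M y : ℂ) *
      ((z.1.choose y : ℂ) * (z.2.choose (M - y) : ℂ))
  else 0

theorem mul_choose_pred (p y : ℕ) :
    (p : ℂ) * ((p - 1).choose y : ℂ) = ((p : ℂ) - y) * (p.choose y : ℂ) := by
  rcases p with _ | p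
  · rcases y with _ | y <;> simp
  · rw [Nat.add_sub_cancel]
    have h1 := Nat.add_one_mul_choose_eq p y
    have h2 := choose_succ_cast (p + 1) y
    have h1' : ((p : ℂ) + 1) * p.choose y = (p + 1).choose (y + 1) * (y + 1) := by exact_mod_cast h1
    push_cast at h2 ⊢
    rw [h1', h2]; ring

theorem upP_strP (s t M q : ℕ) :
    upP (strP s t M q) = ((q : ℂ) + 1) • strP s t M (q + 1) := by
  ext ⟨p, r⟩
  simp only [upP, LinearMap.coe_mk, AddHom.coe_mk, Pi.smul_apply, smul_eq_mul, strP]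
  by_cases h : p + r = M + (q + 1)
  · rw [if_pos h]
    have e1 : (p : ℂ) * (if p - 1 + r = M + q then ∑ y ∈ Finset.range (M + 1),
        (lowF s t M y : ℂ) * (((p - 1).choose y : ℂ) * (r.choose (M - y) : ℂ)) else 0) =
        ∑ y ∈ Finset.range (M + 1), (lowF s t M y : ℂ) *
          (((p : ℂ) - y) * (p.choose y : ℂ) * (r.choose (M - y) : ℂ)) := by
      rcases Nat.eq_zero_or_pos p with hp | hp
      · subst hp
        rw [Nat.cast_zero, zero_mul]
        refine (Finset.sum_eq_zero fun y _ => ?_).symm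
        rcases y with _ | y <;> simp
      · rw [if_pos (by omega), Finset.mul_sum]
        refine Finset.sum_congr rfl fun y _ => ?_
        rw [← mul_choose_pred]; ring
    have e2 : (r : ℂ) * (if p + (r - 1) = M + q then ∑ y ∈ Finset.range (M + 1),
        (lowF s t M y : ℂ) * ((p.choose y : ℂ) * ((r - 1).choose (M - y) : ℂ)) else 0) =
        ∑ y ∈ Finset.range (M + 1), (lowF s t M y : ℂ) *
          ((p.choose y : ℂ) * (((r : ℂ) - (M - y : ℕ)) * (r.choose (M - y) : ℂ))) := by
      rcases Nat.eq_zero_or_pos r with hp | hp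
      · subst hp
        rw [Nat.cast_zero, zero_mul]
        refine (Finset.sum_eq_zero fun y _ => ?_).symm
        rcases M - y with _ | y <;> simp
      · rw [if_pos (by omega), Finset.mul_sum]
        refine Finset.sum_congr rfl fun y _ => ?_
        rw [← mul_choose_pred]; ring
    rw [e1, e2, ← Finset.sum_add_distrib, Finset.mul_sum]
    refine Finset.sum_congr rfl fun y hy => ?_
    have hy' : y ≤ M := by rw [Finset.mem_range] at hy; omega
    have hc : (p : ℂ) + r = M + (q + 1) := by exact_mod_cast h
    rw [Nat.cast_sub hy']
    linear_combination (lowF s t M y : ℂ) * ((p.choose y : ℂ) * (r.choose (M - y) : ℂ)) * hc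
  · rw [if_neg h, mul_zero]
    have e1 : (p : ℂ) * (if p - 1 + r = M + q then ∑ y ∈ Finset.range (M + 1),
        (lowF s t M y : ℂ) * (((p - 1).choose y : ℂ) * (r.choose (M - y) : ℂ)) else 0) = 0 := by
      rcases Nat.eq_zero_or_pos p with hp | hp
      · simp [hp]
      · rw [if_neg (by omega), mul_zero]
    have e2 : (r : ℂ) * (if p + (r - 1) = M + q then ∑ y ∈ Finset.range (M + 1),
        (lowF s t M y : ℂ) * ((p.choose y : ℂ) * ((r - 1).choose (M - y) : ℂ)) else 0) = 0 := by
      rcases Nat.eq_zero_or_pos r with hp | hp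
      · simp [hp]
      · rw [if_neg (by omega), mul_zero]
    rw [e1, e2, add_zero]

theorem strP_zero (s t M p r : ℕ) (h : p + r = M) : strP s t M 0 (p, r) = (lowF s t M p : ℂ) := by
  simp only [strP]
  rw [if_pos (by omega), Finset.sum_eq_single p]
  · rw [show M - p = r by omega]; simp
  · intro y hy hne
    rw [Finset.mem_range] at hy
    rcases lt_or_gt_of_ne hne with h' | h'
    · rw [Nat.choose_eq_zero_of_lt (show r < M - y by omega)]; simp
    · rw [Nat.choose_eq_zero_of_lt h']; simp
  · intro hp; exact absurd (Finset.mem_range.mpr (by omega)) hp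

theorem downP_strP_zero (s t M : ℕ) : downP (s + M) (t + M) (strP s t M 0) = 0 := by
  ext ⟨p, r⟩
  simp only [downP, LinearMap.coe_mk, AddHom.coe_mk, Pi.zero_apply]
  by_cases h : p + r + 1 = M
  · rw [strP_zero s t M (p + 1) r (by omega), strP_zero s t M p (r + 1) (by omega)]
    subst h
    simp only [lowF]
    rw [show p + r + 1 - (p + 1) = r by omega, show p + r + 1 - p = r + 1 by omega,
      poch_succ, poch_succ,
      show p + r + 1 + (p + 1) = (p + r + 1 + p) + 1 by omega, pow_succ]
    push_cast
    ring
  · simp only [strP]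
    rw [if_neg (by omega), if_neg (by omega)]
    simp

/-- The form of a string vector with itself, as a sum over its degree. -/
theorem formP_strP (s t M q : ℕ) (hq : q ≤ s + t) :
    formP (s + M) (t + M) (strP s t M q) (strP s t M q) =
      ∑ p ∈ Finset.range (M + q + 1), ((s + M).choose p : ℂ) * ((t + M).choose (M + q - p) : ℂ) *
        (strP s t M q (p, M + q - p)) ^ 2 := by
  rw [formP]
  symm
  refine Finset.sum_subset_zero_on_sdiff (fun x => by simp only [Finset.mem_range]; omega) ?_ ?_
  · intro p hp
    simp only [Finset.mem_sdiff, Finset.mem_range] at hp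
    refine Finset.sum_eq_zero fun r _ => ?_
    simp only [strP]
    rw [if_neg (by omega)]; simp
  · intro p hp
    rw [Finset.mem_range] at hp
    rw [Finset.sum_eq_single (M + q - p)]
    · ring
    · intro r _ hr
      simp only [strP]
      rw [if_neg (by omega)]; simp
    · intro hn
      exact absurd (Finset.mem_range.mpr (by omega)) hn

/-- Norms along the string generated by `lowF`, whose weight is `s + t`. -/
theorem hahn_string (s t M q : ℕ) (hq : q ≤ s + t) :
    ∑ p ∈ Finset.range (M + q + 1), ((s + M).choose p : ℂ) * ((t + M).choose (M + q - p) : ℂ) *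
        ((hahnE M ((s : ℤ) + M) ((t : ℤ) + M) ((M : ℤ) + q) p : ℤ) : ℂ) ^ 2 =
      ((s + t).choose q : ℂ) * ∑ p ∈ Finset.range (M + 1),
        ((s + M).choose p : ℂ) * ((t + M).choose (M - p) : ℂ) * (lowF s t M p : ℂ) ^ 2 := by
  have h := string_norm upP (downP (s + M) (t + M)) (s + t) (strP s t M)
    (downP_strP_zero s t M) (upP_strP s t M) ?_ (formP (s + M) (t + M)) ?_ ?_
    (upP_adjoint (s + M) (t + M)) q
  · rw [formP_strP s t M q hq, formP_strP s t M 0 (by omega)] at h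
    simp only [Nat.add_zero] at h
    convert h using 1
    · refine Finset.sum_congr rfl fun p hp => ?_
      rw [Finset.mem_range] at hp
      congr 2
      have e : ((M : ℤ) + q) = (p : ℤ) + ((M + q - p : ℕ) : ℤ) := by omega
      rw [e, hahnE_eq]
      simp only [strP]
      rw [if_pos (by omega)]
      push_cast
      rfl
    · congr 1
      refine Finset.sum_congr rfl fun p hp => ?_
      rw [Finset.mem_range] at hp
      rw [strP_zero s t M p (M - p) (by omega)]
  · intro q
    ext ⟨p, r⟩
    rw [downP_upP, Pi.add_apply, Pi.smul_apply, smul_eq_mul]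
    congr 1
    by_cases h : p + r = M + q
    · congr 1
      rw [h]; push_cast; ring
    · simp [strP, h]
  · intro z x y
    simp only [formP, Finset.mul_sum, Pi.smul_apply, smul_eq_mul]
    exact Finset.sum_congr rfl fun _ _ => Finset.sum_congr rfl fun _ _ => by ring
  · intro z x y
    simp only [formP, Finset.mul_sum, Pi.smul_apply, smul_eq_mul]
    exact Finset.sum_congr rfl fun _ _ => Finset.sum_congr rfl fun _ _ => by ring

/-! ### The norm of the lowest-weight vector -/

/-- Vandermonde convolution with negative upper arguments, read off from
`(1 - X)^{-(t+1)} (1 - X)^{-(s+1)} = (1 - X)^{-(s+t+2)}`. -/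
theorem sum_choose_mul_choose (s t M : ℕ) :
    ∑ y ∈ Finset.range (M + 1), (t + y).choose t * (s + (M - y)).choose s =
      (s + t + 1 + M).choose (s + t + 1) := by
  have h : (PowerSeries.mk 1 : PowerSeries ℤ) ^ (t + 1) * (PowerSeries.mk 1) ^ (s + 1) =
      (PowerSeries.mk 1) ^ (s + t + 1 + 1) := by
    rw [← pow_add]; congr 1; ring
  rw [PowerSeries.mk_one_pow_eq_mk_choose_add, PowerSeries.mk_one_pow_eq_mk_choose_add,
    PowerSeries.mk_one_pow_eq_mk_choose_add] at h
  have h' := congrArg (PowerSeries.coeff M) h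
  rw [PowerSeries.coeff_mul, Finset.Nat.sum_antidiagonal_eq_sum_range_succ_mk] at h'
  simp only [PowerSeries.coeff_mk] at h'
  exact_mod_cast h'

theorem choose_mul_poch (s M y : ℕ) (hy : y ≤ M) :
    ((s + M).choose y : ℤ) * (y.factorial : ℤ) * poch ((s : ℤ) + 1) (M - y) =
      poch ((s : ℤ) + 1) M := by
  have h0 : (s.factorial : ℤ) ≠ 0 := by exact_mod_cast Nat.factorial_ne_zero s
  apply mul_left_cancel₀ h0
  have h1 := factorial_mul_poch s (M - y)
  rw [factorial_mul_poch s M]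
  have h2 : ((s + M).choose y * y.factorial * (s + M - y).factorial : ℤ) =
      ((s + M).factorial : ℤ) := by
    exact_mod_cast Nat.choose_mul_factorial_mul_factorial (show y ≤ s + M by omega)
  rw [← h2, show s + M - y = s + (M - y) by omega, ← h1]
  ring

theorem lowF_norm (s t M : ℕ) :
    ∑ p ∈ Finset.range (M + 1),
        ((s + M).choose p : ℂ) * ((t + M).choose (M - p) : ℂ) * (lowF s t M p : ℂ) ^ 2 =
      (M.factorial : ℂ) ^ 2 * (poch ((s : ℤ) + 1) M : ℂ) * (poch ((t : ℤ) + 1) M : ℂ) *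
        ((s + t + 1 + M).choose (s + t + 1) : ℂ) := by
  rw [← sum_choose_mul_choose s t M]
  push_cast
  rw [Finset.mul_sum]
  refine Finset.sum_congr rfl fun y hy => ?_
  rw [Finset.mem_range] at hy
  have h1 := choose_mul_poch s M y (by omega)
  have h2 := choose_mul_poch t M (M - y) (by omega)
  rw [show M - (M - y) = y by omega] at h2
  have h3 := poch_eq_choose t y
  have h4 := poch_eq_choose s (M - y)
  have h5 : ((-1) ^ (M + y) * (-1) ^ (M + y) : ℤ) = 1 := by rw [← mul_pow]; simp
  have key : ((s + M).choose y : ℤ) * ((t + M).choose (M - y) : ℤ) * (lowF s t M y) ^ 2 =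
      (M.factorial : ℤ) ^ 2 * poch ((s : ℤ) + 1) M * poch ((t : ℤ) + 1) M *
        (((t + y).choose t : ℤ) * ((s + (M - y)).choose s : ℤ)) := by
    rw [← h1, ← h2, lowF]
    calc _ = ((-1) ^ (M + y) * (-1) ^ (M + y)) * ((s + M).choose y : ℤ) *
          ((t + M).choose (M - y) : ℤ) * (M.factorial : ℤ) ^ 2 *
          (poch ((t : ℤ) + 1) y * poch ((s : ℤ) + 1) (M - y)) *
          (poch ((t : ℤ) + 1) y * poch ((s : ℤ) + 1) (M - y)) := by ring
      _ = _ := by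
        rw [h5]
        conv_lhs => rw [mul_assoc _ (poch ((t : ℤ) + 1) y * poch ((s : ℤ) + 1) (M - y)),
          h3, h4]
        conv_rhs => rw [h3, h4]
        ring
  exact_mod_cast congrArg (Int.cast : ℤ → ℂ) key

/-- Factorial bookkeeping turning the string constants into the stated closed form; here
`c = M + q` and `a + b - c = M + u`. -/
theorem closed_form (M q u : ℕ) :
    ((q + u).choose q : ℂ) * ((M.factorial : ℂ) ^ 2 *
        ((q + u + 1 + M).choose (q + u + 1) : ℂ)) =
      ((2 * M + q + u).choose (M + q) : ℂ) * ((2 * M + q + u).choose M : ℂ)⁻¹ *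
        (((M : ℂ) + q + u + 1) / ((q : ℂ) + u + 1)) *
        ((poch ((q : ℤ) + 1) M : ℤ) : ℂ) * ((poch ((u : ℤ) + 1) M : ℤ) : ℂ) := by
  have c1 : ((q + u).choose q : ℂ) = (q + u).factorial / (q.factorial * u.factorial) := by
    rw [Nat.cast_add_choose]
  have c2 : ((q + u + 1 + M).choose (q + u + 1) : ℂ) =
      (q + u + 1 + M).factorial / ((q + u + 1).factorial * M.factorial) := by
    rw [Nat.cast_add_choose]
  have c3 : ((2 * M + q + u).choose (M + q) : ℂ) =
      (2 * M + q + u).factorial / ((M + q).factorial * (M + u).factorial) := by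
    rw [show 2 * M + q + u = (M + q) + (M + u) by ring, Nat.cast_add_choose]
  have c4 : ((2 * M + q + u).choose M : ℂ) =
      (2 * M + q + u).factorial / (M.factorial * (M + q + u).factorial) := by
    rw [show 2 * M + q + u = M + (M + q + u) by ring, Nat.cast_add_choose]
  have p1 : ((poch ((q : ℤ) + 1) M : ℤ) : ℂ) = (M + q).factorial / q.factorial := by
    have h0 : (q.factorial : ℂ) ≠ 0 := by exact_mod_cast Nat.factorial_ne_zero q
    rw [eq_div_iff h0, mul_comm, add_comm M q]
    exact_mod_cast factorial_mul_poch q M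
  have p2 : ((poch ((u : ℤ) + 1) M : ℤ) : ℂ) = (M + u).factorial / u.factorial := by
    have h0 : (u.factorial : ℂ) ≠ 0 := by exact_mod_cast Nat.factorial_ne_zero u
    rw [eq_div_iff h0, mul_comm, add_comm M u]
    exact_mod_cast factorial_mul_poch u M
  rw [c1, c2, c3, c4, p1, p2, show q + u + 1 + M = (M + q + u) + 1 by ring,
    Nat.factorial_succ (M + q + u), Nat.factorial_succ (q + u)]
  have f : ∀ x : ℕ, (x.factorial : ℂ) ≠ 0 := fun x => by exact_mod_cast Nat.factorial_ne_zero x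
  have f1 := f q
  have f2 := f u
  have f3 := f M
  have f4 := f (M + q)
  have f5 := f (M + u)
  have f6 := f (M + q + u)
  have f7 := f (2 * M + q + u)
  have f8 := f (q + u)
  have f9 : (q : ℂ) + u + 1 ≠ 0 := by exact_mod_cast Nat.succ_ne_zero (q + u)
  push_cast
  field_simp

/-- The norm formula for Hahn polynomials, with `a = s + M`, `b = t + M`, `c = M + q`. -/
theorem hahn_norm (s t M q u : ℕ) (hqu : q + u = s + t) :
    ∑ p ∈ Finset.range (M + q + 1), ((s + M).choose p : ℂ) * ((t + M).choose (M + q - p) : ℂ) *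
        ((hahnE M ((s : ℤ) + M) ((t : ℤ) + M) ((M : ℤ) + q) p : ℤ) : ℂ) ^ 2 =
      ((2 * M + q + u).choose (M + q) : ℂ) * ((2 * M + q + u).choose M : ℂ)⁻¹ *
        (((M : ℂ) + q + u + 1) / ((q : ℂ) + u + 1)) *
        ((poch ((s : ℤ) + 1) M : ℤ) : ℂ) * ((poch ((t : ℤ) + 1) M : ℤ) : ℂ) *
        ((poch ((q : ℤ) + 1) M : ℤ) : ℂ) * ((poch ((u : ℤ) + 1) M : ℤ) : ℂ) := by
  rw [hahn_string s t M q (by omega), lowF_norm, ← hqu]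
  linear_combination ((poch ((s : ℤ) + 1) M : ℤ) : ℂ) * ((poch ((t : ℤ) + 1) M : ℤ) : ℂ) *
    closed_form M q u

/-- Theorem 2.6, norm formula (2.11) for `T_m(φ⊗ψ)`. -/
theorem stmt9 (n h i j k m : ℕ) (hn : 1 ≤ n) (hh : h ≤ n) (hm : m ≤ n)
    (hk1 : k ≤ n - m) (hk2 : k ≤ m) (hi : 2 * i ≤ h) (hj : 2 * j ≤ n - h)
    (hc1 : (k : ℤ) - h ≤ (j : ℤ) - i) (hc2 : (j : ℤ) - i ≤ (n : ℤ) - h - k)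
    (hc3 : i + j ≤ k)
    (φ ψ : Finset (Fin n) → ℂ)
    (hφsupp : ∀ s : Finset (Fin n), ¬(s ⊆ block n 0 h ∧ s.card = i) → φ s = 0)
    (hφd : dR n φ = 0)
    (hψsupp : ∀ s : Finset (Fin n), ¬(s ⊆ block n h (n - h) ∧ s.card = j) → ψ s = 0)
    (hψd : dR n ψ = 0) :
    ip n (Tmap n h i j k φ ψ m) (Tmap n h i j k φ ψ m) =
      ((n - 2 * i - 2 * j).choose (m - i - j) : ℂ) *
        ((n - 2 * i - 2 * j).choose (k - i - j) : ℂ)⁻¹ *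
        (((n : ℂ) - i - j - k + 1) / ((n : ℂ) - 2 * k + 1)) *
        ((poch ((n : ℤ) - h - j - k + i + 1) (k - i - j) : ℤ) : ℂ) *
        ((poch ((h : ℤ) - i - k + j + 1) (k - i - j) : ℤ) : ℂ) *
        ((poch ((m : ℤ) - k + 1) (k - i - j) : ℤ) : ℂ) *
        ((poch ((n : ℤ) - m - k + 1) (k - i - j) : ℤ) : ℂ) *
        ip n φ φ * ip n ψ ψ := by
  obtain ⟨M, hM⟩ : ∃ M, k = i + j + M := ⟨k - (i + j), by omega⟩
  obtain ⟨s, hs⟩ : ∃ s, n - h = 2 * j + (s + M) := ⟨n - h - 2 * j - M, by omega⟩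
  obtain ⟨t, ht⟩ : ∃ t, h = 2 * i + (t + M) := ⟨h - 2 * i - M, by omega⟩
  obtain ⟨q, hq⟩ : ∃ q, m = k + q := ⟨m - k, by omega⟩
  obtain ⟨u, hu⟩ : ∃ u, n - m = k + u := ⟨n - m - k, by omega⟩
  have hqu : q + u = s + t := by omega
  rw [ip_Tmap n h i j k m hh hi hj φ ψ hφsupp hφd hψsupp hψd]
  have hsum : (∑ w ∈ Finset.Icc (max j (i + m - h)) (min (n - h - j) (m - i)),
        (((hahnE (k - i - j) ((n : ℤ) - h - 2 * j) ((h : ℤ) - 2 * i) ((m : ℤ) - i - j)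
          ((w : ℤ) - j) : ℤ) : ℂ)) ^ 2 * (((h - 2 * i).choose (m - w - i) : ℂ) *
            ((n - h - 2 * j).choose (w - j) : ℂ))) =
      ∑ p ∈ Finset.range (M + q + 1), ((s + M).choose p : ℂ) * ((t + M).choose (M + q - p) : ℂ) *
        ((hahnE M ((s : ℤ) + M) ((t : ℤ) + M) ((M : ℤ) + q) p : ℤ) : ℂ) ^ 2 := by
    have hwide : (∑ w ∈ Finset.Icc j (m - i),
        (((hahnE (k - i - j) ((n : ℤ) - h - 2 * j) ((h : ℤ) - 2 * i) ((m : ℤ) - i - j)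
          ((w : ℤ) - j) : ℤ) : ℂ)) ^ 2 * (((h - 2 * i).choose (m - w - i) : ℂ) *
            ((n - h - 2 * j).choose (w - j) : ℂ))) =
      ∑ p ∈ Finset.range (M + q + 1), ((s + M).choose p : ℂ) * ((t + M).choose (M + q - p) : ℂ) *
        ((hahnE M ((s : ℤ) + M) ((t : ℤ) + M) ((M : ℤ) + q) p : ℤ) : ℂ) ^ 2 := by
      refine Finset.sum_nbij' (fun w => w - j) (fun p => p + j) ?_ ?_ ?_ ?_ ?_
      · intro w; simp only [Finset.mem_Icc, Finset.mem_range]; omega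
      · intro p; simp only [Finset.mem_Icc, Finset.mem_range]; omega
      · intro w; simp only [Finset.mem_Icc]; omega
      · intro p _; simp
      · intro w hw
        rw [Finset.mem_Icc] at hw
        rw [show k - i - j = M by omega, show (n : ℤ) - h - 2 * j = (s : ℤ) + M by omega,
          show (h : ℤ) - 2 * i = (t : ℤ) + M by omega, show (m : ℤ) - i - j = (M : ℤ) + q by omega,
          show (w : ℤ) - j = ((w - j : ℕ) : ℤ) by omega, show h - 2 * i = t + M by omega,
          show n - h - 2 * j = s + M by omega, show m - w - i = M + q - (w - j) by omega]
        ring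
    rw [← hwide]
    -- The terms outside the smaller range carry a vanishing binomial coefficient.
    refine Finset.sum_subset (fun w => by simp only [Finset.mem_Icc]; omega) ?_
    intro w hw hw'
    rw [Finset.mem_Icc] at hw hw'
    rcases lt_or_ge (h - 2 * i) (m - w - i) with h1 | h1
    · rw [Nat.choose_eq_zero_of_lt h1]; simp
    · rw [Nat.choose_eq_zero_of_lt (show n - h - 2 * j < w - j by omega)]; simp
  have hnc : (n : ℂ) = 2 * i + 2 * j + 2 * M + q + u := by
    have : n = 2 * i + 2 * j + 2 * M + q + u := by omega
    rw [this]; push_cast; ring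
  have hkc : (k : ℂ) = i + j + M := by rw [hM]; push_cast; ring
  have e1 : (n : ℂ) - i - j - k + 1 = (M : ℂ) + q + u + 1 := by rw [hnc, hkc]; ring
  have e2 : (n : ℂ) - 2 * k + 1 = (q : ℂ) + u + 1 := by rw [hnc, hkc]; ring
  rw [hsum, hahn_norm s t M q u hqu, e1, e2,
    show n - 2 * i - 2 * j = 2 * M + q + u by omega, show m - i - j = M + q by omega,
    show k - i - j = M by omega, show (n : ℤ) - h - j - k + i + 1 = (s : ℤ) + 1 by omega,
    show (h : ℤ) - i - k + j + 1 = (t : ℤ) + 1 by omega,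
    show (m : ℤ) - k + 1 = (q : ℤ) + 1 by omega, show (n : ℤ) - m - k + 1 = (u : ℤ) + 1 by omega]
  ring
end
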